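/- Let L : ℝ³ → ℝ be a smooth Lagrangian in the variables (x,u,p), let ξ, η, R : ℝ² → ℝ be smooth functions of (x,u), and let λ : ℝ³ → ℝ be a smooth function of (x,u,p). Define D_xF(x,u,p) = ∂_xF(x,u) + p·∂_uF(x,u), η₁ = D_xη − p·D_xξ + λ·(η − ξ·p), and suppose the divergence λ-variational symmetry condition ξ·∂_xL + η·∂_uL + η₁·∂_pL + L·(D_xξ + λ·ξ) = D_xR + λ·R holds identically on ℝ³. Define I(x,u,p) = ξ(x,u)·(L(x,u,p) − p·∂_pL(x,u,p)) + η(x,u)·∂_pL(x,u,p) − R(x,u). Let J ⊆ ℝ be an open interval and let u : J → ℝ be twice differentiable with continuous derivative, solving the Euler-Lagrange equation d/dx[∂_pL(x,u(x),u'(x))] = ∂_uL(x,u(x),u'(x)) on J. If I(x₀,u(x₀),u'(x₀)) = 0 for some x₀ ∈ J, then I(x,u(x),u'(x)) = 0 for all x ∈ J. -/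

import Mathlib

/-- Truncated total derivative `D_x F (x,u,p) = ∂_x F(x,u) + p ∂_u F(x,u)`. -/
noncomputable def Dx (F : ℝ → ℝ → ℝ) (x u p : ℝ) : ℝ :=
  deriv (fun t => F t u) x + p * deriv (fun v => F x v) u

/-- Partial derivative of the Lagrangian with respect to `x`. -/
noncomputable def Lx (L : ℝ → ℝ → ℝ → ℝ) (x u p : ℝ) : ℝ := deriv (fun t => L t u p) x

/-- Partial derivative of the Lagrangian with respect to `u`. -/
noncomputable def Lu (L : ℝ → ℝ → ℝ → ℝ) (x u p : ℝ) : ℝ := deriv (fun v => L x v p) u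

/-- Partial derivative of the Lagrangian with respect to `p`. -/
noncomputable def Lp (L : ℝ → ℝ → ℝ → ℝ) (x u p : ℝ) : ℝ := deriv (fun q => L x u q) p

/-- First λ-prolonged coefficient `η₁ = D_x η − p D_x ξ + λ (η − ξ p)`. -/
noncomputable def eta1 (ξ η : ℝ → ℝ → ℝ) (lam : ℝ → ℝ → ℝ → ℝ) (x u p : ℝ) : ℝ :=
  Dx η x u p - p * Dx ξ x u p + lam x u p * (η x u - ξ x u * p)

/-- The Noether-type function `I = ξ (L − p ∂_p L) + η ∂_p L − R`. -/
noncomputable def NoetherI (L : ℝ → ℝ → ℝ → ℝ) (ξ η R : ℝ → ℝ → ℝ) (x u p : ℝ) : ℝ :=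
  ξ x u * (L x u p - p * Lp L x u p) + η x u * Lp L x u p - R x u

/-- Chain rule for a function of two variables along a graph. -/
lemma hasDerivAt_comp_graph {F : ℝ → ℝ → ℝ} {u : ℝ → ℝ} {x p : ℝ}
    (hF : DifferentiableAt ℝ (fun z : ℝ × ℝ => F z.1 z.2) (x, u x)) (hu : HasDerivAt u p x) :
    HasDerivAt (fun t => F t (u t)) (Dx F x (u x) p) x := by
  obtain ⟨D, hD⟩ := hF
  have h₁ : deriv (fun t => F t (u x)) x = D (1, 0) :=
    (hD.comp_hasDerivAt (f := fun t => (t, u x)) x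
      ((hasDerivAt_id x).prodMk (hasDerivAt_const x (u x)))).deriv
  have h₂ : deriv (fun v => F x v) (u x) = D (0, 1) :=
    (hD.comp_hasDerivAt (f := fun v => (x, v)) (u x)
      ((hasDerivAt_const (u x) x).prodMk (hasDerivAt_id (u x)))).deriv
  have h : HasDerivAt (fun t => F t (u t)) (D (1, p)) x :=
    hD.comp_hasDerivAt (f := fun t => (t, u t)) x ((hasDerivAt_id x).prodMk hu)
  refine h.congr_deriv ?_
  rw [Dx, h₁, h₂, ← smul_eq_mul, ← map_smul, ← map_add]
  simp

/-- Partial derivative in `p` as a value of the total derivative. -/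
lemma Lp_eq_of_hasFDerivAt {L : ℝ → ℝ → ℝ → ℝ} {x u p : ℝ} {D : ℝ × ℝ × ℝ →L[ℝ] ℝ}
    (hD : HasFDerivAt (fun z : ℝ × ℝ × ℝ => L z.1 z.2.1 z.2.2) D (x, u, p)) :
    Lp L x u p = D (0, 0, 1) :=
  (hD.comp_hasDerivAt (f := fun q => (x, u, q)) p ((hasDerivAt_const p x).prodMk
    ((hasDerivAt_const p u).prodMk (hasDerivAt_id p)))).deriv

/-- Chain rule for a function of three variables along a curve in the jet space. -/
lemma hasDerivAt_comp_jet {L : ℝ → ℝ → ℝ → ℝ} {u v : ℝ → ℝ} {x p q : ℝ}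
    (hL : DifferentiableAt ℝ (fun z : ℝ × ℝ × ℝ => L z.1 z.2.1 z.2.2) (x, u x, v x))
    (hu : HasDerivAt u p x) (hv : HasDerivAt v q x) :
    HasDerivAt (fun t => L t (u t) (v t))
      (Lx L x (u x) (v x) + p * Lu L x (u x) (v x) + q * Lp L x (u x) (v x)) x := by
  obtain ⟨D, hD⟩ := hL
  have h₁ : Lx L x (u x) (v x) = D (1, 0, 0) :=
    (hD.comp_hasDerivAt (f := fun t => (t, u x, v x)) x
      ((hasDerivAt_id x).prodMk (hasDerivAt_const x (u x, v x)))).deriv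
  have h₂ : Lu L x (u x) (v x) = D (0, 1, 0) :=
    (hD.comp_hasDerivAt (f := fun w => (x, w, v x)) (u x) ((hasDerivAt_const (u x) x).prodMk
      ((hasDerivAt_id (u x)).prodMk (hasDerivAt_const (u x) (v x))))).deriv
  have h : HasDerivAt (fun t => L t (u t) (v t)) (D (1, p, q)) x :=
    hD.comp_hasDerivAt (f := fun t => (t, u t, v t)) x
      ((hasDerivAt_id x).prodMk (hu.prodMk hv))
  refine h.congr_deriv ?_
  rw [h₁, h₂, Lp_eq_of_hasFDerivAt hD, ← smul_eq_mul, ← smul_eq_mul,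
    ← map_smul, ← map_smul, ← map_add, ← map_add]
  simp

/-- The momentum `∂_p L` of a smooth Lagrangian is differentiable. -/
lemma differentiable_Lp {L : ℝ → ℝ → ℝ → ℝ}
    (hL : ContDiff ℝ (⊤ : ℕ∞) fun z : ℝ × ℝ × ℝ => L z.1 z.2.1 z.2.2) :
    Differentiable ℝ fun z : ℝ × ℝ × ℝ => Lp L z.1 z.2.1 z.2.2 := by
  have hLp : (fun z : ℝ × ℝ × ℝ => Lp L z.1 z.2.1 z.2.2) =
      fun z => fderiv ℝ (fun z : ℝ × ℝ × ℝ => L z.1 z.2.1 z.2.2) z (0, 0, 1) :=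
    funext fun z => Lp_eq_of_hasFDerivAt (hL.differentiable (by simp) z).hasFDerivAt
  rw [hLp]
  have h : ContDiff ℝ (⊤ : ℕ∞) (fderiv ℝ (fun z : ℝ × ℝ × ℝ => L z.1 z.2.1 z.2.2)) :=
    hL.fderiv_right (by simp)
  exact (h.differentiable (by simp)).clm_apply (differentiable_const _)

/-- A solution of a homogeneous linear first-order equation with continuous coefficient on an open
interval vanishes identically as soon as it vanishes at one point. -/
lemma eq_zero_of_hasDerivAt_neg_mul {J : Set ℝ} (hJ : IsOpen J) (hJc : J.OrdConnected)
    {a φ : ℝ → ℝ} (ha : ContinuousOn a J) (hφ : ∀ x ∈ J, HasDerivAt φ (-a x * φ x) x)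
    {x₀ : ℝ} (hx₀ : x₀ ∈ J) (h₀ : φ x₀ = 0) : ∀ x ∈ J, φ x = 0 := by
  have hA : ∀ x ∈ J, HasDerivAt (fun y => ∫ t in x₀..y, a t) (a x) x := fun x hx =>
    intervalIntegral.integral_hasDerivAt_right
      (ha.mono (hJc.uIcc_subset hx₀ hx)).intervalIntegrable
      (ha.stronglyMeasurableAtFilter hJ x hx) (ha.continuousAt (hJ.mem_nhds hx))
  have hg : ∀ x ∈ J, HasDerivAt (fun y => φ y * Real.exp (∫ t in x₀..y, a t)) 0 x := by
    intro x hx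
    exact ((hφ x hx).mul (hA x hx).exp).congr_deriv (by ring)
  intro x hx
  have h := hJ.is_const_of_deriv_eq_zero hJc.isPreconnected
    (fun y hy => (hg y hy).differentiableAt.differentiableWithinAt)
    (fun y hy => (hg y hy).deriv) hx hx₀
  simpa [h₀] using h

/-- Conditional reduction: for a divergence λ-variational symmetry of `L`, the hypersurface
`{I = 0}` is invariant along solutions of the Euler–Lagrange equation: if `I` vanishes at one
point of a solution, it vanishes identically along that solution. -/
theorem lambda_variational_conditional_reduction
    (L lam : ℝ → ℝ → ℝ → ℝ) (ξ η R : ℝ → ℝ → ℝ)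
    (hL : ContDiff ℝ (⊤ : ℕ∞) fun z : ℝ × ℝ × ℝ => L z.1 z.2.1 z.2.2)
    (hξ : ContDiff ℝ (⊤ : ℕ∞) fun z : ℝ × ℝ => ξ z.1 z.2)
    (hη : ContDiff ℝ (⊤ : ℕ∞) fun z : ℝ × ℝ => η z.1 z.2)
    (hR : ContDiff ℝ (⊤ : ℕ∞) fun z : ℝ × ℝ => R z.1 z.2)
    (hlam : ContDiff ℝ (⊤ : ℕ∞) fun z : ℝ × ℝ × ℝ => lam z.1 z.2.1 z.2.2)
    (hsym : ∀ x u p : ℝ,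
      ξ x u * Lx L x u p + η x u * Lu L x u p + eta1 ξ η lam x u p * Lp L x u p
        + L x u p * (Dx ξ x u p + lam x u p * ξ x u)
      = Dx R x u p + lam x u p * R x u)
    (J : Set ℝ) (hJopen : IsOpen J) (hJconn : J.OrdConnected)
    (u : ℝ → ℝ)
    (hu1 : ∀ x ∈ J, DifferentiableAt ℝ u x)
    (hu2 : ∀ x ∈ J, DifferentiableAt ℝ (deriv u) x)
    (hu2c : ContinuousOn (deriv u) J)
    (hEL : ∀ x ∈ J,
      deriv (fun t => Lp L t (u t) (deriv u t)) x = Lu L x (u x) (deriv u x))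
    (x₀ : ℝ) (hx₀ : x₀ ∈ J)
    (hI₀ : NoetherI L ξ η R x₀ (u x₀) (deriv u x₀) = 0) :
    ∀ x ∈ J, NoetherI L ξ η R x (u x) (deriv u x) = 0 := by
  have hcont : ContinuousOn (fun x => lam x (u x) (deriv u x)) J :=
    hlam.continuous.comp_continuousOn (continuousOn_id.prodMk
      (ContinuousOn.prodMk (fun x hx => (hu1 x hx).continuousAt.continuousWithinAt) hu2c))
  refine eq_zero_of_hasDerivAt_neg_mul hJopen hJconn hcont (fun x hx => ?_) hx₀ hI₀
  have hu := (hu1 x hx).hasDerivAt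
  have hv := (hu2 x hx).hasDerivAt
  have hdξ := hasDerivAt_comp_graph (hξ.differentiable (by simp) _) hu
  have hdη := hasDerivAt_comp_graph (hη.differentiable (by simp) _) hu
  have hdR := hasDerivAt_comp_graph (hR.differentiable (by simp) _) hu
  have hdL := hasDerivAt_comp_jet (hL.differentiable (by simp) _) hu hv
  have hdLp : HasDerivAt (fun t => Lp L t (u t) (deriv u t)) (Lu L x (u x) (deriv u x)) x := by
    rw [← hEL x hx]
    exact (hasDerivAt_comp_jet (differentiable_Lp hL _) hu hv).differentiableAt.hasDerivAt
  have h := ((hdξ.mul (hdL.sub (hv.mul hdLp))).add (hdη.mul hdLp)).sub hdR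
  refine h.congr_deriv ?_
  have hs := hsym x (u x) (deriv u x)
  simp only [eta1] at hs
  simp only [NoetherI, Pi.sub_apply, Pi.mul_apply]
  linear_combination hs
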